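/- Let y be dual feasible. Let T ⊆ E be the edge set of a tree in G (a connected acyclic subgraph) whose vertex set contains the vertices v and w, and let R ⊆ T be the edge set of the unique v–w path in T. Then c(R) ≤ Σ_{U ⊆ V : U separates {v,w}} y_U + 2 · (c(T) − Σ_{U ⊆ V : T ∩ δ(U) ≠ ∅} y_U). -/

import Mathlib

/-!
Write `r e = c e - ∑ {U : e ∈ δ(U)}, y U`, the slack of `e` in the dual, which is nonnegative on `T`,
and let `R` be the edge set of `p`. Exchanging the order of summation (`sum_cut_eq`) turns `c(S)` into `r(S) + ∑ U, |S ∩ δ(U)| * y U`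
for `S = R` and for `S = T`. Since `r(R) ≤ r(T) ≤ 2 r(T)`, it is enough to compare the
coefficients of each `y U` (`cut_count_bound`):
`|R ∩ δ(U)| ≤ [U separates v, w] + 2 (|T ∩ δ(U)| - [T ∩ δ(U) ≠ ∅])`.
As `R ⊆ T`, this is clear unless `|R ∩ δ(U)| = |T ∩ δ(U)| = 1`; in that case `U` separates `v` and
`w`, because a walk crosses `δ(U)` an odd number of times exactly when `U` separates its endpoints
(`odd_countP_inCut`).
-/

open Finset

variable {V : Type*}

/-- `e ∈ δ(U)`: the edge `e` has exactly one endpoint in `U`. -/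
def inCut (U : Finset V) (e : Sym2 V) : Prop :=
  ∃ a b : V, e = s(a, b) ∧ a ∈ U ∧ b ∉ U

/-- `U` separates the pair `{v, w}`: exactly one of `v`, `w` lies in `U`. -/
def SepPair (U : Finset V) (v w : V) : Prop :=
  (v ∈ U ∧ w ∉ U) ∨ (w ∈ U ∧ v ∉ U)

theorem inCut_mk (U : Finset V) (a b : V) : inCut U s(a, b) ↔ SepPair U a b := by
  constructor
  · rintro ⟨x, y, h, hx, hy⟩
    rcases Sym2.eq_iff.1 h with ⟨rfl, rfl⟩ | ⟨rfl, rfl⟩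
    · exact Or.inl ⟨hx, hy⟩
    · exact Or.inr ⟨hx, hy⟩
  · rintro (⟨ha, hb⟩ | ⟨hb, ha⟩)
    · exact ⟨a, b, rfl, ha, hb⟩
    · exact ⟨b, a, Sym2.eq_swap, hb, ha⟩

open Classical in
theorem odd_countP_inCut {H : SimpleGraph V} (U : Finset V) {v w : V} (p : H.Walk v w) :
    Odd (p.edges.countP fun e => decide (inCut U e)) ↔ SepPair U v w := by
  induction p with
  | nil => simp [SepPair]
  | @cons a b d h q ih =>
    rw [SimpleGraph.Walk.edges_cons, List.countP_cons]
    simp only [decide_eq_true_eq, inCut_mk]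
    by_cases hab : SepPair U a b
    · rw [if_pos hab, Nat.odd_add_one, ih]
      unfold SepPair at *
      tauto
    · rw [if_neg hab, add_zero, ih]
      unfold SepPair at *
      tauto

open Classical in
/-- Comparison of the coefficients of `y U` on the two sides of the bound. That `p` is a path only
matters through its edges being distinct, so that counting with multiplicity equals counting. -/
theorem cut_count_bound [DecidableEq V] {H : SimpleGraph V} (U : Finset V) {v w : V} (p : H.Walk v w)
    (hp : p.IsPath) (T : Finset (Sym2 V)) (hT : p.edges.toFinset ⊆ T) :
    (#{e ∈ p.edges.toFinset | inCut U e} : ℝ) ≤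
      (if SepPair U v w then 1 else 0) +
        2 * ((#{e ∈ T | inCut U e} : ℝ) -
          if (T.filter fun e => inCut U e).Nonempty then 1 else 0) := by
  have hodd := odd_countP_inCut U p
  have hcount : p.edges.countP (fun e => decide (inCut U e)) =
      #{e ∈ p.edges.toFinset | inCut U e} := by
    have hfilter : {e ∈ p.edges.toFinset | inCut U e} =
        (p.edges.filter fun e => decide (inCut U e)).toFinset := by
      ext e
      simp
    rw [hfilter, List.toFinset_card_of_nodup (hp.edges_nodup.filter _),
      List.countP_eq_length_filter]
  rw [hcount] at hodd
  have hle := card_le_card (filter_subset_filter (fun e => inCut U e) hT)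
  simp only [← card_pos]
  generalize #{e ∈ p.edges.toFinset | inCut U e} = k at *
  generalize #{e ∈ T | inCut U e} = t at *
  have key : k + 2 * (if 0 < t then 1 else 0) ≤ (if SepPair U v w then 1 else 0) + 2 * t := by
    by_cases hs : SepPair U v w
    · rw [if_pos hs]
      split_ifs <;> omega
    · have hk : k ≠ 1 := by
        rintro rfl
        exact hs (hodd.1 odd_one)
      rw [if_neg hs]
      split_ifs <;> omega
  have key' : (k : ℝ) + 2 * (if 0 < t then 1 else 0) ≤
      (if SepPair U v w then 1 else 0) + 2 * t := by exact_mod_cast key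
  linarith

open Classical in
theorem sum_cut_eq [Fintype V] (y : Finset V → ℝ) (S : Finset (Sym2 V)) :
    ∑ e ∈ S, ∑ U ∈ univ.filter (fun U : Finset V => inCut U e), y U =
      ∑ U : Finset V, (#{e ∈ S | inCut U e} : ℝ) * y U := by
  simp only [sum_filter]
  rw [sum_comm]
  refine sum_congr rfl fun U _ => ?_
  rw [← sum_filter, sum_const, nsmul_eq_mul]

open Classical in
/-- for a dual feasible `y`, a tree `T ⊆ E` containing vertices `v`, `w`,
and the unique `v`–`w` path `R` in `T`,
`c(R) ≤ ∑_{U separates {v,w}} y_U + 2 · (c(T) − ∑_{U : T ∩ δ(U) ≠ ∅} y_U)`. -/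
theorem path_cost_bound [Fintype V] [DecidableEq V]
    (G : SimpleGraph V) [DecidableRel G.Adj]
    (c : Sym2 V → ℝ) (hc : ∀ e, 0 ≤ c e)
    (y : Finset V → ℝ) (hy : ∀ U, 0 ≤ y U)
    (hdual : ∀ e ∈ G.edgeFinset,
      ∑ U ∈ univ.filter (fun U : Finset V => inCut U e), y U ≤ c e)
    (T : Finset (Sym2 V)) (hTE : T ⊆ G.edgeFinset)
    (hacyc : (SimpleGraph.fromEdgeSet (T : Set (Sym2 V))).IsAcyclic)
    (hconn : ∀ a b : V, (∃ e ∈ T, a ∈ e) → (∃ e ∈ T, b ∈ e) →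
      (SimpleGraph.fromEdgeSet (T : Set (Sym2 V))).Reachable a b)
    (v w : V)
    (p : (SimpleGraph.fromEdgeSet (T : Set (Sym2 V))).Walk v w) (hp : p.IsPath) :
    ∑ e ∈ p.edges.toFinset, c e ≤
      (∑ U ∈ univ.filter (fun U : Finset V => SepPair U v w), y U) +
        2 * ((∑ e ∈ T, c e) -
          ∑ U ∈ univ.filter
            (fun U : Finset V => (T.filter fun e => inCut U e).Nonempty), y U) := by
  have hRT : p.edges.toFinset ⊆ T := by
    intro e he
    have h := p.edges_subset_edgeSet (List.mem_toFinset.1 he)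
    rw [SimpleGraph.edgeSet_fromEdgeSet] at h
    exact h.1
  have hslack : ∀ e ∈ T,
      0 ≤ c e - ∑ U ∈ univ.filter (fun U : Finset V => inCut U e), y U :=
    fun e he => sub_nonneg.2 (hdual e (hTE he))
  have hmono := sum_le_sum_of_subset_of_nonneg hRT fun e he _ => hslack e he
  have hnonneg := sum_nonneg hslack
  rw [sum_sub_distrib, sum_sub_distrib, sum_cut_eq, sum_cut_eq] at hmono
  rw [sum_sub_distrib, sum_cut_eq] at hnonneg
  have hcoef := sum_le_sum fun (U : Finset V) (_ : U ∈ univ) =>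
    mul_le_mul_of_nonneg_right (cut_count_bound U p hp T hRT) (hy U)
  simp only [add_mul, sub_mul, mul_assoc, ite_mul, one_mul, zero_mul, sum_add_distrib,
    ← mul_sum, sum_sub_distrib, ← sum_filter] at hcoef
  linarith
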